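/- arXiv:2406.01051 — 2 statements merged into one kernel-verified Lean document; each statement's English description precedes it below -/
import Mathlib

section
/- Let I = I(S_N(e,s)) be the defining ideal of a star configuration S_N(e,s) in P^N built from s hyperplanes with defining linear forms in general position, where 1 ≤ e ≤ min(N,s), and let m be a positive integer. Let J be the ideal of the fat scheme mS_N(e,s), i.e. the symbolic powers of J are given by J^{(k)} = I^{(mk)}. Then the Waldschmidt constant of J equals ms/e, i.e. inf_{k≥1} α(I^{(mk)})/k = ms/e. -/
noncomputable section

open MvPolynomial

/-- `alpha J` is the least degree of a nonzero homogeneous form in the ideal `J`. -/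
def alpha {kk : Type*} [Field kk] {σ : Type*} (J : Ideal (MvPolynomial σ kk)) : ℕ :=
  sInf {d : ℕ | ∃ f ∈ J, f ≠ 0 ∧ MvPolynomial.IsHomogeneous f d}

/-!
A form `f` lies in the `M`-th power of the ideal of a linear subspace iff it vanishes to order `M`
along that subspace. To detect this order, split the space of linear forms as `W ⊕ W'`, where `W`
is spanned by the equations of the subspace, and scale `W` by a parameter `t`: then
`f ∈ (W) ^ M` iff `t ^ M` divides the deformed polynomial. Since `t` is prime, `(W)` is a prime
ideal and its powers are primary.

Lower bound: let `f ≠ 0` lie in `I^{(M)}`; we show `M * s ≤ deg f * e` by induction on `e` and `M`.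
If every `ℓ i` divides `f`, then `f = (∏ ℓ i) * g` with `g ∈ I^{(M - e)}`, and `deg f = s + deg g`.
If some `ℓ i` does not divide `f`, then `f` restricts to a nonzero form on the hyperplane
`ℓ i = 0`, where the other hyperplanes cut out a star configuration with parameters
`(e - 1, s - 1)`; this gives `M * (s - 1) ≤ deg f * (e - 1)`, which is even stronger as `e ≤ s`
(for `e = 1` the restriction lies in the `M`-th power of the zero ideal, so `M = 0`).

Upper bound: `(∏ ℓ i) ^ m` has degree `m * s` and lies in `I^{(m * e)}`.
-/

section Deformation

variable {R σ : Type*} [CommRing R] (P : MvPolynomial σ R →ₗ[R] MvPolynomial σ R)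

/-- The substitution `x ↦ (x - P x) + t * P x` on linear forms. When `P` is a projection onto a
space `W` of linear forms, it scales `W` by `t` and fixes the complement `ker P`. Only the values
of `P` on the variables matter. -/
def deformation : MvPolynomial σ R →ₐ[R] Polynomial (MvPolynomial σ R) :=
  aeval fun i => Polynomial.C (X i - P (X i)) + Polynomial.X * Polynomial.C (P (X i))

/-- The substitution `x ↦ x - P x` on linear forms. When `P` is a projection onto a space `W` of
linear forms, this is restriction to the linear subspace cut out by `W`, composed with the pullback
along a linear projection back onto that subspace, so that the polynomial ring does not change. -/
def restriction : MvPolynomial σ R →ₐ[R] MvPolynomial σ R :=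
  aeval fun i => X i - P (X i)

lemma linearMap_apply_eq_of_isHomogeneous_one {V : Type*} [AddCommMonoid V] [Module R V]
    {A B : MvPolynomial σ R →ₗ[R] V} (h : ∀ i, A (X i) = B (X i)) {v : MvPolynomial σ R}
    (hv : v.IsHomogeneous 1) : A v = B v := by
  have hv' : v ∈ Submodule.span R (Set.range (X : σ → MvPolynomial σ R)) := by
    rwa [← homogeneousSubmodule_one_eq_span_X]
  exact LinearMap.eqOn_span (Set.forall_mem_range.2 h) hv'

lemma deformation_apply_of_isHomogeneous_one {v : MvPolynomial σ R} (hv : v.IsHomogeneous 1) :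
    deformation P v = Polynomial.C (v - P v) + Polynomial.X * Polynomial.C (P v) := by
  let constant : MvPolynomial σ R →ₗ[R] Polynomial (MvPolynomial σ R) :=
    (Polynomial.CAlgHom (R := R)).toLinearMap
  exact linearMap_apply_eq_of_isHomogeneous_one (A := (deformation P).toLinearMap)
    (B := constant ∘ₗ (LinearMap.id - P) + LinearMap.mulLeft R Polynomial.X ∘ₗ constant ∘ₗ P)
    (fun i => by simp [deformation, constant]) hv

lemma restriction_apply_of_isHomogeneous_one {v : MvPolynomial σ R} (hv : v.IsHomogeneous 1) :
    restriction P v = v - P v :=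
  eq_sub_of_add_eq <| linearMap_apply_eq_of_isHomogeneous_one (A := (restriction P).toLinearMap + P)
    (B := LinearMap.id) (fun i => by simp [restriction]) hv

lemma eval_one_deformation (f : MvPolynomial σ R) : (deformation P f).eval 1 = f := by
  have h : ((Polynomial.aeval (1 : MvPolynomial σ R)).restrictScalars R).comp (deformation P) =
      AlgHom.id R _ := by
    ext i; simp [deformation]
  simpa using DFunLike.congr_fun h f

lemma coeff_zero_deformation (f : MvPolynomial σ R) :
    (deformation P f).coeff 0 = restriction P f := by
  have h : ((Polynomial.aeval (0 : MvPolynomial σ R)).restrictScalars R).comp (deformation P) =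
      restriction P := by
    ext i; simp [deformation, restriction]
  simpa [Polynomial.coeff_zero_eq_eval_zero] using DFunLike.congr_fun h f

variable {P} {G : Set (MvPolynomial σ R)}

lemma deformation_mem_reesAlgebra (hP : ∀ f, P f ∈ Submodule.span R G) (f : MvPolynomial σ R) :
    deformation P f ∈ reesAlgebra (Ideal.span G) := by
  have hPG (g) : P g ∈ Ideal.span G :=
    Submodule.span_le_restrictScalars R (MvPolynomial σ R) G (hP g)
  induction f using MvPolynomial.induction_on with
  | C a =>
    have hC : deformation P (C a) = Polynomial.C (C a) := by
      simp [deformation, algebraMap_eq, Polynomial.algebraMap_apply]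
    exact hC ▸ Subalgebra.algebraMap_mem _ _
  | add p q hp hq => exact map_add (deformation P) p q ▸ add_mem hp hq
  | mul_X p i hp =>
    have hX : deformation P (X i) =
        Polynomial.C (X i - P (X i)) + Polynomial.monomial 1 (P (X i)) := by
      simp [deformation, ← Polynomial.C_mul_X_eq_monomial]
    rw [map_mul, hX]
    refine mul_mem hp (add_mem (Subalgebra.algebraMap_mem _ _) ?_)
    exact reesAlgebra.monomial_mem.2 (by simpa using hPG (X i))

lemma deformation_apply_of_mem (hG : ∀ v ∈ G, v.IsHomogeneous 1)
    (hP : LinearMap.IsProj (Submodule.span R G) P) {v : MvPolynomial σ R} (hv : v ∈ G) :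
    deformation P v = Polynomial.X * Polynomial.C v := by
  rw [deformation_apply_of_isHomogeneous_one P (hG v hv),
    hP.map_id v (Submodule.subset_span hv), sub_self, map_zero, zero_add]

theorem mem_span_pow_iff_X_pow_dvd_deformation (hG : ∀ v ∈ G, v.IsHomogeneous 1)
    (hP : LinearMap.IsProj (Submodule.span R G) P) {f : MvPolynomial σ R} {M : ℕ} :
    f ∈ Ideal.span G ^ M ↔ Polynomial.X ^ M ∣ deformation P f := by
  constructor
  · intro hf
    have hle : (Ideal.span G).map (deformation P) ≤ Ideal.span {Polynomial.X} := by
      rw [Ideal.map_span, Ideal.span_le]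
      rintro _ ⟨v, hv, rfl⟩
      exact Ideal.mem_span_singleton.2 ⟨_, deformation_apply_of_mem hG hP hv⟩
    have hmem : deformation P f ∈ (Ideal.span G).map (deformation P) ^ M :=
      Ideal.map_pow (deformation P) _ M ▸ Ideal.mem_map_of_mem _ hf
    simpa [Ideal.span_singleton_pow, Ideal.mem_span_singleton] using
      Ideal.pow_right_mono hle M hmem
  · intro hdvd
    rw [← eval_one_deformation P f, Polynomial.eval_eq_sum, Polynomial.sum]
    refine Ideal.sum_mem _ fun n _ => ?_
    rw [one_pow, mul_one]
    rcases lt_or_ge n M with hlt | hge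
    · rw [Polynomial.X_pow_dvd_iff.1 hdvd n hlt]
      exact zero_mem _
    · exact Ideal.pow_le_pow_right hge (deformation_mem_reesAlgebra hP.map_mem f n)

lemma mem_span_iff_restriction_eq_zero (hG : ∀ v ∈ G, v.IsHomogeneous 1)
    (hP : LinearMap.IsProj (Submodule.span R G) P) {f : MvPolynomial σ R} :
    f ∈ Ideal.span G ↔ restriction P f = 0 := by
  rw [← coeff_zero_deformation, ← Polynomial.X_dvd_iff, ← pow_one Polynomial.X,
    ← mem_span_pow_iff_X_pow_dvd_deformation hG hP, pow_one]

lemma isHomogeneous_one_of_mem_span (hG : ∀ v ∈ G, v.IsHomogeneous 1) {v : MvPolynomial σ R}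
    (hv : v ∈ Submodule.span R G) : v.IsHomogeneous 1 :=
  (Submodule.span_le (p := homogeneousSubmodule σ R 1)).2 hG hv

lemma isHomogeneous_restriction (hG : ∀ v ∈ G, v.IsHomogeneous 1)
    (hP : ∀ f, P f ∈ Submodule.span R G) {f : MvPolynomial σ R} {n : ℕ}
    (hf : f.IsHomogeneous n) : (restriction P f).IsHomogeneous n := by
  rw [← one_mul n]
  exact hf.aeval _ fun i =>
    (isHomogeneous_X R i).sub (isHomogeneous_one_of_mem_span hG (hP (X i)))

lemma totalDegree_restriction_le (hG : ∀ v ∈ G, v.IsHomogeneous 1)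
    (hP : ∀ f, P f ∈ Submodule.span R G) (f : MvPolynomial σ R) :
    (restriction P f).totalDegree ≤ f.totalDegree := by
  conv_lhs => rw [← sum_homogeneousComponent f, map_sum]
  refine totalDegree_finsetSum_le fun n hn => ?_
  have hhom := isHomogeneous_restriction hG hP (homogeneousComponent_isHomogeneous n f)
  exact hhom.totalDegree_le.trans (Nat.lt_succ_iff.1 (Finset.mem_range.1 hn))

end Deformation

section LinearSubspaceIdeal

variable {kk σ ι : Type*} [Field kk] {G : Set (MvPolynomial σ kk)}

lemma exists_isProj {V : Type*} [AddCommGroup V] [Module kk V] (W : Submodule kk V) :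
    ∃ P : V →ₗ[kk] V, LinearMap.IsProj W P := by
  obtain ⟨W', hW⟩ := W.exists_isCompl
  exact ⟨W.projection W' hW, Submodule.projection_apply_mem hW,
    fun _ => Submodule.projection_apply_of_mem_left hW⟩

lemma isPrime_span_of_isHomogeneous_one (hG : ∀ v ∈ G, v.IsHomogeneous 1) :
    (Ideal.span G).IsPrime := by
  obtain ⟨P, hP⟩ := exists_isProj (Submodule.span kk G)
  have hker : Ideal.span G = RingHom.ker (restriction P) :=
    Ideal.ext fun _ => mem_span_iff_restriction_eq_zero hG hP
  exact hker ▸ RingHom.ker_isPrime (restriction P)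

lemma mem_span_iff_of_isHomogeneous_one (hG : ∀ v ∈ G, v.IsHomogeneous 1)
    {v : MvPolynomial σ kk} (hv : v.IsHomogeneous 1) :
    v ∈ Ideal.span G ↔ v ∈ Submodule.span kk G := by
  obtain ⟨P, hP⟩ := exists_isProj (Submodule.span kk G)
  rw [mem_span_iff_restriction_eq_zero hG hP, restriction_apply_of_isHomogeneous_one P hv,
    sub_eq_zero, eq_comm, hP.mem_iff_map_id]

lemma mem_span_pow_of_mul_mem (hG : ∀ v ∈ G, v.IsHomogeneous 1) {h g : MvPolynomial σ kk} {M : ℕ}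
    (hh : h ∉ Ideal.span G) (hhg : h * g ∈ Ideal.span G ^ M) : g ∈ Ideal.span G ^ M := by
  obtain ⟨P, hP⟩ := exists_isProj (Submodule.span kk G)
  rw [← pow_one (Ideal.span G), mem_span_pow_iff_X_pow_dvd_deformation hG hP, pow_one] at hh
  rw [mem_span_pow_iff_X_pow_dvd_deformation hG hP] at hhg ⊢
  rw [map_mul] at hhg
  exact Polynomial.prime_X.pow_dvd_of_dvd_mul_left M hh hhg

lemma mem_span_pow_sub_card_of_prod_mul_mem (hG : ∀ v ∈ G, v.IsHomogeneous 1)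
    {ℓ : ι → MvPolynomial σ kk} {T : Finset ι} (hT : ∀ i ∈ T, ℓ i ∈ G) (hT0 : ∀ i ∈ T, ℓ i ≠ 0)
    {g : MvPolynomial σ kk} {M : ℕ} (hg : (∏ i ∈ T, ℓ i) * g ∈ Ideal.span G ^ M) :
    g ∈ Ideal.span G ^ (M - T.card) := by
  obtain ⟨P, hP⟩ := exists_isProj (Submodule.span kk G)
  have hprod : deformation P (∏ i ∈ T, ℓ i) =
      Polynomial.X ^ T.card * Polynomial.C (∏ i ∈ T, ℓ i) := by
    rw [map_prod, map_prod, ← Finset.prod_const, ← Finset.prod_mul_distrib]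
    exact Finset.prod_congr rfl fun i hi => deformation_apply_of_mem hG hP (hT i hi)
  have hX : ¬Polynomial.X ∣ Polynomial.C (∏ i ∈ T, ℓ i) := by
    rw [Polynomial.X_dvd_iff, Polynomial.coeff_C_zero]
    exact Finset.prod_ne_zero_iff.2 hT0
  rcases le_total M T.card with hle | hge
  · simp [Nat.sub_eq_zero_of_le hle]
  · rw [mem_span_pow_iff_X_pow_dvd_deformation hG hP] at hg ⊢
    rw [map_mul, hprod, mul_assoc, ← Nat.add_sub_cancel' hge, pow_add] at hg
    exact Polynomial.prime_X.pow_dvd_of_dvd_mul_left _ hX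
      ((mul_dvd_mul_iff_left (pow_ne_zero _ Polynomial.X_ne_zero)).1 hg)

lemma prime_of_isHomogeneous_one {v : MvPolynomial σ kk} (hv : v.IsHomogeneous 1) (hv0 : v ≠ 0) :
    Prime v :=
  (Ideal.span_singleton_prime hv0).1 (isPrime_span_of_isHomogeneous_one (by simpa using hv))

lemma dvd_iff_mem_span_of_isHomogeneous_one {v w : MvPolynomial σ kk} (hv : v.IsHomogeneous 1)
    (hw : w.IsHomogeneous 1) : v ∣ w ↔ w ∈ Submodule.span kk {v} := by
  rw [← mem_span_iff_of_isHomogeneous_one (by simpa using hv) hw, Ideal.mem_span_singleton]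

end LinearSubspaceIdeal

/-- Any at most `n` of the vectors `v i`, `i ∈ S`, are linearly independent. -/
def InGeneralPosition (kk : Type*) {ι V : Type*} [Field kk] [AddCommGroup V] [Module kk V]
    (v : ι → V) (S : Finset ι) (n : ℕ) : Prop :=
  ∀ T ⊆ S, T.card ≤ n → LinearIndepOn kk v (T : Set ι)

namespace InGeneralPosition

variable {kk ι V W : Type*} [Field kk] [AddCommGroup V] [Module kk V] [AddCommGroup W]
  [Module kk W] {v : ι → V} {S T : Finset ι} {n : ℕ} {i : ι}

lemma mono (hv : InGeneralPosition kk v S n) {m : ℕ} (hmn : m ≤ n) :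
    InGeneralPosition kk v S m :=
  fun T hTS hT => hv T hTS (hT.trans hmn)

lemma ne_zero (hv : InGeneralPosition kk v S (n + 1)) (hi : i ∈ S) : v i ≠ 0 :=
  (hv {i} (by simpa using hi) (by simp)).ne_zero (by simp)

lemma linearIndepOn_insert (hv : InGeneralPosition kk v S (n + 1)) (hTS : T ⊆ S)
    (hT : T.card ≤ n) (hi : i ∈ S) : LinearIndepOn kk v (insert i (T : Set ι)) := by
  classical
  rw [← Finset.coe_insert]
  exact hv _ (Finset.insert_subset hi hTS)
    ((Finset.card_insert_le i T).trans (Nat.add_le_add_right hT 1))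

lemma notMem_span (hv : InGeneralPosition kk v S (n + 1)) (hTS : T ⊆ S) (hT : T.card ≤ n)
    (hi : i ∈ S) (hiT : i ∉ T) : v i ∉ Submodule.span kk (v '' (T : Set ι)) :=
  (hv.linearIndepOn_insert hTS hT hi).notMem_span_of_insert (by simpa using hiT)

lemma map_erase [DecidableEq ι] (hv : InGeneralPosition kk v S (n + 1)) (hi : i ∈ S)
    {Q : V →ₗ[kk] W} (hQ : LinearMap.ker Q = Submodule.span kk {v i}) :
    InGeneralPosition kk (Q ∘ v) (S.erase i) n := by
  intro T hT hTn
  have hTS : T ⊆ S := hT.trans (Finset.erase_subset i S)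
  have hiT : i ∉ T := fun h => Finset.notMem_erase i S (hT h)
  refine LinearIndependent.map (f := Q) (hv T hTS (hTn.trans n.le_succ)) ?_
  rw [hQ, Set.range_comp' v Subtype.val, Subtype.range_coe,
    Submodule.disjoint_span_singleton' (hv.ne_zero hi)]
  exact hv.notMem_span hTS hTn hi hiT

end InGeneralPosition

section StarConfiguration

variable {kk σ ι : Type*} [Field kk] {ℓ : ι → MvPolynomial σ kk} {S : Finset ι} {e M : ℕ}
  {f : MvPolynomial σ kk}

/-- The `M`-th symbolic power of the ideal of the star configuration of codimension `e` built from
the hyperplanes `ℓ i = 0`, `i ∈ S`. -/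
def starSymbolicPower (ℓ : ι → MvPolynomial σ kk) (S : Finset ι) (e M : ℕ) :
    Ideal (MvPolynomial σ kk) :=
  ⨅ T ∈ S.powersetCard e, Ideal.span (ℓ '' (T : Set ι)) ^ M

lemma mem_starSymbolicPower :
    f ∈ starSymbolicPower ℓ S e M ↔
      ∀ T ⊆ S, T.card = e → f ∈ Ideal.span (ℓ '' (T : Set ι)) ^ M := by
  simp [starSymbolicPower, Finset.mem_powersetCard]

lemma starSymbolicPower_anti : Antitone (starSymbolicPower ℓ S e) := fun _ _ hle =>
  iInf₂_mono fun _ _ => Ideal.pow_le_pow_right hle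

lemma pow_prod_mem_starSymbolicPower (q : ℕ) :
    (∏ i ∈ S, ℓ i) ^ q ∈ starSymbolicPower ℓ S e (q * e) := by
  classical
  refine mem_starSymbolicPower.2 fun T hTS hT => ?_
  have hT_mem : ∏ i ∈ T, ℓ i ∈ Ideal.span (ℓ '' (T : Set ι)) ^ e := by
    rw [← hT, ← Finset.prod_const]
    exact Ideal.prod_mem_prod fun i hi => Ideal.subset_span ⟨i, hi, rfl⟩
  rw [pow_mul', ← Finset.prod_sdiff hTS]
  exact Ideal.pow_mem_pow (Ideal.mul_mem_left _ _ hT_mem) q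

lemma InGeneralPosition.prod_ne_zero {n : ℕ} (hgen : InGeneralPosition kk ℓ S (n + 1)) :
    ∏ i ∈ S, ℓ i ≠ 0 :=
  Finset.prod_ne_zero_iff.2 fun _ => hgen.ne_zero

lemma isHomogeneous_prod_of_isHomogeneous_one (hdeg : ∀ i, (ℓ i).IsHomogeneous 1) :
    (∏ i ∈ S, ℓ i).IsHomogeneous S.card := by
  simpa using IsHomogeneous.prod S ℓ (fun _ => 1) fun i _ => hdeg i

lemma prod_dvd_of_forall_dvd (hdeg : ∀ i, (ℓ i).IsHomogeneous 1)
    (hgen : InGeneralPosition kk ℓ S 2) (hdvd : ∀ i ∈ S, ℓ i ∣ f) : ∏ i ∈ S, ℓ i ∣ f := by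
  refine Finset.prod_dvd_of_isRelPrime (fun i hi j hj hij => ?_) hdvd
  have hirr : Irreducible (ℓ i) :=
    (prime_of_isHomogeneous_one (hdeg i) (hgen.ne_zero hi)).irreducible
  refine hirr.isRelPrime_iff_not_dvd.2 fun hij_dvd => ?_
  have hnot_mem := hgen.notMem_span (T := {i}) (by simpa using hi) (by simp) hj
    (by simpa using hij.symm)
  rw [dvd_iff_mem_span_of_isHomogeneous_one (hdeg i) (hdeg j)] at hij_dvd
  exact hnot_mem (by simpa using hij_dvd)

lemma mem_starSymbolicPower_sub_of_prod_mul_mem (hdeg : ∀ i, (ℓ i).IsHomogeneous 1)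
    (hgen : InGeneralPosition kk ℓ S (e + 1))
    (hf : (∏ i ∈ S, ℓ i) * f ∈ starSymbolicPower ℓ S e M) :
    f ∈ starSymbolicPower ℓ S e (M - e) := by
  classical
  refine mem_starSymbolicPower.2 fun T hTS hT => ?_
  have hG : ∀ v ∈ ℓ '' (T : Set ι), v.IsHomogeneous 1 := Set.forall_mem_image.2 fun i _ => hdeg i
  have hprime := isPrime_span_of_isHomogeneous_one hG
  have hcompl : ∏ i ∈ S \ T, ℓ i ∉ Ideal.span (ℓ '' (T : Set ι)) := by
    rw [Ideal.IsPrime.prod_mem_iff]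
    rintro ⟨i, hi, hmem⟩
    obtain ⟨hiS, hiT⟩ := Finset.mem_sdiff.1 hi
    exact hgen.notMem_span hTS hT.le hiS hiT
      ((mem_span_iff_of_isHomogeneous_one hG (hdeg i)).1 hmem)
  have hfT := mem_starSymbolicPower.1 hf T hTS hT
  rw [← Finset.prod_sdiff hTS, mul_assoc] at hfT
  rw [← hT]
  exact mem_span_pow_sub_card_of_prod_mul_mem hG (fun i hi => ⟨i, hi, rfl⟩)
    (fun i hi => hgen.ne_zero (hTS hi)) (mem_span_pow_of_mul_mem hG hcompl hfT)

lemma map_mem_starSymbolicPower_erase [DecidableEq ι] {τ : Type*} {i : ι} (hi : i ∈ S)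
    {φ : MvPolynomial σ kk →ₐ[kk] MvPolynomial τ kk} (hφ : φ (ℓ i) = 0)
    (hf : f ∈ starSymbolicPower ℓ S (e + 1) M) :
    φ f ∈ starSymbolicPower (φ ∘ ℓ) (S.erase i) e M := by
  refine mem_starSymbolicPower.2 fun T hT hTe => ?_
  have hiT : i ∉ T := fun h => Finset.notMem_erase i S (hT h)
  have hf_insert := mem_starSymbolicPower.1 hf (insert i T)
    (Finset.insert_subset hi (hT.trans (Finset.erase_subset i S)))
    (by rw [Finset.card_insert_of_notMem hiT, hTe])
  have hmap := Ideal.mem_map_of_mem φ hf_insert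
  rwa [Ideal.map_pow, Ideal.map_span, ← Set.image_comp, Finset.coe_insert, Set.image_insert_eq,
    Function.comp_apply, hφ, Ideal.span_insert_zero] at hmap

lemma inGeneralPosition_restriction_erase [DecidableEq ι] {n : ℕ}
    (hdeg : ∀ i, (ℓ i).IsHomogeneous 1) (hgen : InGeneralPosition kk ℓ S (n + 1)) {i : ι}
    (hi : i ∈ S) {P : MvPolynomial σ kk →ₗ[kk] MvPolynomial σ kk}
    (hP : LinearMap.IsProj (Submodule.span kk {ℓ i}) P) :
    InGeneralPosition kk (restriction P ∘ ℓ) (S.erase i) n := by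
  have hker : LinearMap.ker (LinearMap.id - P) = Submodule.span kk {ℓ i} := by
    ext v
    rw [LinearMap.mem_ker, LinearMap.sub_apply, sub_eq_zero, hP.mem_iff_map_id, eq_comm,
      LinearMap.id_apply]
  have hrestrict : restriction P ∘ ℓ = (LinearMap.id - P : _ →ₗ[kk] _) ∘ ℓ := by
    ext1 j
    rw [Function.comp_apply, restriction_apply_of_isHomogeneous_one P (hdeg j),
      Function.comp_apply, LinearMap.sub_apply, LinearMap.id_apply]
  rw [hrestrict]
  exact hgen.map_erase hi hker

lemma exists_restriction_of_not_dvd [DecidableEq ι] {n : ℕ}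
    (hdeg : ∀ i, (ℓ i).IsHomogeneous 1) (hgen : InGeneralPosition kk ℓ S (n + 1))
    (hf : f ∈ starSymbolicPower ℓ S (e + 1) M) {i : ι} (hi : i ∈ S) (hif : ¬ℓ i ∣ f) :
    ∃ (ℓ' : ι → MvPolynomial σ kk) (g : MvPolynomial σ kk), (∀ j, (ℓ' j).IsHomogeneous 1) ∧
      InGeneralPosition kk ℓ' (S.erase i) n ∧ g ∈ starSymbolicPower ℓ' (S.erase i) e M ∧
      g ≠ 0 ∧ g.totalDegree ≤ f.totalDegree := by
  obtain ⟨P, hP⟩ := exists_isProj (Submodule.span kk {ℓ i})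
  have hG : ∀ v ∈ ({ℓ i} : Set (MvPolynomial σ kk)), v.IsHomogeneous 1 := by simpa using hdeg i
  have hdvd (g) : restriction P g = 0 ↔ ℓ i ∣ g := by
    rw [← mem_span_iff_restriction_eq_zero hG hP, Ideal.mem_span_singleton]
  exact ⟨restriction P ∘ ℓ, restriction P f,
    fun j => isHomogeneous_restriction hG hP.map_mem (hdeg j),
    inGeneralPosition_restriction_erase hdeg hgen hi hP,
    map_mem_starSymbolicPower_erase hi ((hdvd _).2 dvd_rfl) hf,
    mt (hdvd f).1 hif, totalDegree_restriction_le hG hP.map_mem f⟩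

lemma eq_zero_of_mem_starSymbolicPower_zero (hf0 : f ≠ 0) (hf : f ∈ starSymbolicPower ℓ S 0 M) :
    M = 0 := by
  by_contra hM
  have hf_empty := mem_starSymbolicPower.1 hf ∅ (Finset.empty_subset S) Finset.card_empty
  exact hf0 (by simpa [hM] using hf_empty)

lemma mul_succ_le_mul_succ_of_mul_le_mul {M c d e : ℕ} (he : e ≠ 0) (hec : e ≤ c)
    (h : M * c ≤ d * e) : M * (c + 1) ≤ d * (e + 1) := by
  have hMd : M ≤ d :=
    Nat.le_of_mul_le_mul_right ((Nat.mul_le_mul_left M hec).trans h) (Nat.pos_of_ne_zero he)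
  rw [mul_add_one, mul_add_one]
  exact add_le_add h hMd

theorem mul_card_le_totalDegree_mul (hdeg : ∀ i, (ℓ i).IsHomogeneous 1) (heS : e ≤ S.card)
    (hgen : InGeneralPosition kk ℓ S (e + 1)) (hf0 : f ≠ 0)
    (hf : f ∈ starSymbolicPower ℓ S e M) : M * S.card ≤ f.totalDegree * e := by
  classical
  induction e generalizing ℓ S f M with
  | zero => simp [eq_zero_of_mem_starSymbolicPower_zero hf0 hf]
  | succ e ihe =>
    induction M using Nat.strong_induction_on generalizing f with
    | _ M ihM =>
      rcases eq_or_ne M 0 with rfl | hM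
      · simp
      by_cases hall : ∀ i ∈ S, ℓ i ∣ f
      · obtain ⟨g, rfl⟩ := prod_dvd_of_forall_dvd hdeg (hgen.mono (by lia)) hall
        have hprod0 := hgen.prod_ne_zero
        have hg0 : g ≠ 0 := right_ne_zero_of_mul hf0
        have hg := mem_starSymbolicPower_sub_of_prod_mul_mem hdeg hgen hf
        calc M * S.card ≤ (M - (e + 1) + (e + 1)) * S.card :=
              Nat.mul_le_mul_right _ le_tsub_add
          _ = (e + 1) * S.card + (M - (e + 1)) * S.card := by ring
          _ ≤ (e + 1) * S.card + g.totalDegree * (e + 1) :=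
              Nat.add_le_add_left (ihM _ (by lia) hg0 hg) _
          _ = ((∏ i ∈ S, ℓ i) * g).totalDegree * (e + 1) := by
              rw [totalDegree_mul_of_isDomain hprod0 hg0,
                (isHomogeneous_prod_of_isHomogeneous_one hdeg).totalDegree hprod0]
              ring
      · push Not at hall
        obtain ⟨i, hi, hif⟩ := hall
        obtain ⟨ℓ', g, hdeg', hgen', hg, hg0, hgf⟩ :=
          exists_restriction_of_not_dvd hdeg hgen hf hi hif
        have he0 : e ≠ 0 := by
          rintro rfl
          exact hM (eq_zero_of_mem_starSymbolicPower_zero hg0 hg)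
        have hcard : (S.erase i).card + 1 = S.card := Finset.card_erase_add_one hi
        have heS' : e ≤ (S.erase i).card := by lia
        rw [← hcard]
        exact mul_succ_le_mul_succ_of_mul_le_mul he0 heS'
          ((ihe hdeg' heS' hgen' hg0 hg).trans (Nat.mul_le_mul_right e hgf))

lemma alpha_le {J : Ideal (MvPolynomial σ kk)} {d : ℕ} (hfJ : f ∈ J) (hf0 : f ≠ 0)
    (hfd : f.IsHomogeneous d) : alpha J ≤ d :=
  Nat.sInf_le ⟨f, hfJ, hf0, hfd⟩

lemma exists_isHomogeneous_alpha {J : Ideal (MvPolynomial σ kk)} {d : ℕ} (hfJ : f ∈ J)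
    (hf0 : f ≠ 0) (hfd : f.IsHomogeneous d) : ∃ g ∈ J, g ≠ 0 ∧ g.IsHomogeneous (alpha J) :=
  Nat.sInf_mem (s := {d | ∃ g ∈ J, g ≠ 0 ∧ g.IsHomogeneous d}) ⟨d, f, hfJ, hf0, hfd⟩

lemma alpha_starSymbolicPower_mul_le (hdeg : ∀ i, (ℓ i).IsHomogeneous 1)
    (hgen : InGeneralPosition kk ℓ S (e + 1)) (q : ℕ) :
    alpha (starSymbolicPower ℓ S e (q * e)) ≤ S.card * q :=
  alpha_le (pow_prod_mem_starSymbolicPower q)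
    (pow_ne_zero q hgen.prod_ne_zero)
    ((isHomogeneous_prod_of_isHomogeneous_one hdeg).pow q)

lemma mul_card_le_alpha_starSymbolicPower_mul (hdeg : ∀ i, (ℓ i).IsHomogeneous 1) (he : 1 ≤ e)
    (heS : e ≤ S.card) (hgen : InGeneralPosition kk ℓ S (e + 1)) (M : ℕ) :
    M * S.card ≤ alpha (starSymbolicPower ℓ S e M) * e := by
  have hprod_mem : (∏ i ∈ S, ℓ i) ^ M ∈ starSymbolicPower ℓ S e M :=
    starSymbolicPower_anti (Nat.le_mul_of_pos_right M he) (pow_prod_mem_starSymbolicPower M)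
  obtain ⟨f, hf, hf0, hfdeg⟩ := exists_isHomogeneous_alpha hprod_mem
    (pow_ne_zero M hgen.prod_ne_zero)
    ((isHomogeneous_prod_of_isHomogeneous_one hdeg).pow M)
  rw [← hfdeg.totalDegree hf0]
  exact mul_card_le_totalDegree_mul hdeg heS hgen hf0 hf

theorem waldschmidt_fat_star_configuration_general (he : 1 ≤ e) (heS : e ≤ S.card)
    (hdeg : ∀ i, (ℓ i).IsHomogeneous 1) (hgen : InGeneralPosition kk ℓ S (e + 1)) (m : ℕ) :
    ⨅ k : ℕ+, (alpha (starSymbolicPower ℓ S e (m * (k : ℕ))) : ℝ) / ((k : ℕ) : ℝ) =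
      ((m : ℝ) * (S.card : ℝ)) / (e : ℝ) := by
  have he0 : (0 : ℝ) < e := by exact_mod_cast he
  apply le_antisymm
  · have hbdd : BddBelow (Set.range fun k : ℕ+ =>
        (alpha (starSymbolicPower ℓ S e (m * (k : ℕ))) : ℝ) / ((k : ℕ) : ℝ)) :=
      ⟨0, Set.forall_mem_range.2 fun _ => by positivity⟩
    have hupper : (alpha (starSymbolicPower ℓ S e (m * e)) : ℝ) ≤ m * S.card := by
      rw [mul_comm (m : ℝ)]
      exact_mod_cast alpha_starSymbolicPower_mul_le hdeg hgen m
    exact (ciInf_le hbdd ⟨e, he⟩).trans (div_le_div_of_nonneg_right hupper he0.le)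
  · refine le_ciInf fun k => ?_
    have hk : (0 : ℝ) < ((k : ℕ) : ℝ) := by exact_mod_cast k.pos
    rw [div_le_div_iff₀ he0 hk, mul_right_comm]
    exact_mod_cast mul_card_le_alpha_starSymbolicPower_mul hdeg he heS hgen (m * k)

end StarConfiguration

/-- Let `I` be the ideal of the star configuration `S_N(e,s)` in `ℙ^N`,
built from `s` hyperplanes whose defining linear forms `ℓ 0, …, ℓ (s-1)` are in general
position (any at most `N+1` of them are linearly independent), where `1 ≤ e ≤ min(N,s)`.
For a positive integer `m`, the fat scheme `m S_N(e,s)` has defining ideal `J` with symbolic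
powers `J^{(k)} = I^{(mk)} = ⋂_{|T| = e} (span (ℓ '' T))^{mk}`.  Then the Waldschmidt
constant of `J`, namely `inf_{k ≥ 1} α(I^{(mk)})/k`, equals `m s / e`. -/
theorem waldschmidt_fat_star_configuration
    {kk : Type*} [Field kk] [IsAlgClosed kk]
    (N s e : ℕ) (he : 1 ≤ e) (heN : e ≤ N) (hes : e ≤ s)
    (ℓ : Fin s → MvPolynomial (Fin (N + 1)) kk)
    (hdeg : ∀ i, (ℓ i).IsHomogeneous 1)
    (hgen : ∀ T : Finset (Fin s), T.card ≤ N + 1 →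
      LinearIndependent kk (fun i : T => ℓ (i : Fin s)))
    (m : ℕ) (hm : 1 ≤ m) :
    ⨅ k : ℕ+, (alpha (⨅ (T : Finset (Fin s)) (_ : T.card = e),
        (Ideal.span (ℓ '' (T : Set (Fin s)))) ^ (m * (k : ℕ))) : ℝ) / ((k : ℕ) : ℝ)
      = ((m : ℝ) * (s : ℝ)) / (e : ℝ) := by
  simpa [starSymbolicPower, Finset.mem_powersetCard] using
    waldschmidt_fat_star_configuration_general (S := Finset.univ) he (by simpa using hes) hdeg
      (fun T _ hT => hgen T (by lia)) m
end
end

section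
/- Let s ≥ 3 and let L_1,…,L_s be lines in P^2 in general position (pairwise distinct and no three concurrent), with star configuration points p_{ij} = L_i ∩ L_j for 1 ≤ i < j ≤ s. For each i let q_i be a point of L_i distinct from all the points p_{jk}, with q_1,…,q_s pairwise distinct and not all collinear. Let W_2 be the fat quasi-star configuration with defining ideal I(W_2) = ⋂_{i=1}^s I(q_i) ∩ ⋂_{1≤i<j≤s} I(p_{ij})^2. Then α(I(W_2)^{(k)}) = sk for every integer k ≥ 1; in particular the Waldschmidt constant of I(W_2) equals s. -/
noncomputable section

open MvPolynomial

/-- The homogeneous (prime) ideal of the point of `ℙ²` represented by the nonzero vector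
`p`, generated by the linear forms vanishing at `p`. -/
def pointIdeal {kk : Type*} [Field kk] (p : Fin 3 → kk) : Ideal (MvPolynomial (Fin 3) kk) :=
  Ideal.span {f | f.IsHomogeneous 1 ∧ MvPolynomial.eval p f = 0}

/-- Two nonzero vectors represent the same point of `ℙ²`. -/
def projEq {kk : Type*} [Field kk] (p q : Fin 3 → kk) : Prop :=
  ∃ c : kk, c ≠ 0 ∧ q = c • p

/-!
Each `p i j` has ideal `(ℓ i, ℓ j)`, so the product of all `ℓ i`, raised to the power `k`, is a form
of degree `s * k` in the `k`-th symbolic power. Conversely, let `F ≠ 0` lie in every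
`(ℓ i, ℓ j) ^ (2 * k)` and have degree less than `s * k ≤ (s - 1) * (2 * k)`. The restriction of `F`
to the line `ℓ i = 0` is divisible by the product of the `ℓ j ^ (2 * k)` with `j ≠ i`, so by degree
it vanishes and `ℓ i` divides `F`. Thus `F = (∏ i, ℓ i) * G`. Since `ℓ i, ℓ j` is a regular sequence
generating a prime ideal, dividing by `∏ i, ℓ i` lowers the order along `(ℓ i, ℓ j)` by exactly
two, so `G` lies in every `(ℓ i, ℓ j) ^ (2 * (k - 1))`, and induction on `k` applies to `G`.
-/

section SpanPair

theorem exists_eq_mul_add_mul_pow_of_mem_span_pair_pow {R : Type*} [CommSemiring R] {a b x : R}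
    {n : ℕ} (hx : x ∈ Ideal.span {a, b} ^ (n + 1)) :
    ∃ y ∈ Ideal.span {a, b} ^ n, ∃ d, x = a * y + d * b ^ (n + 1) := by
  induction n generalizing x with
  | zero =>
    rw [zero_add, pow_one, Ideal.mem_span_pair] at hx
    obtain ⟨y, d, rfl⟩ := hx
    exact ⟨y, by simp, d, by ring⟩
  | succ n ih =>
    rw [pow_succ', Ideal.span_insert, Ideal.sup_mul, ← Ideal.span_insert, Submodule.mem_sup] at hx
    obtain ⟨_, hay, _, hbz, rfl⟩ := hx
    obtain ⟨y, hy, rfl⟩ := Ideal.mem_span_singleton_mul.1 hay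
    obtain ⟨z, hz, rfl⟩ := Ideal.mem_span_singleton_mul.1 hbz
    obtain ⟨w, hw, d, rfl⟩ := ih hz
    have hbw : b * w ∈ Ideal.span {a, b} ^ (n + 1) := by
      rw [pow_succ']
      exact Ideal.mul_mem_mul (Ideal.subset_span (by simp)) hw
    exact ⟨y + b * w, add_mem hy hbw, d, by ring⟩

variable {R : Type*} [CommRing R] [IsDomain R] {a b c x : R} {n : ℕ}

theorem mem_span_pair_pow_of_left_mul_mem (ha : Prime a) (hab : ¬ a ∣ b)
    (hx : a * x ∈ Ideal.span {a, b} ^ (n + 1)) : x ∈ Ideal.span {a, b} ^ n := by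
  obtain ⟨y, hy, d, hxy⟩ := exists_eq_mul_add_mul_pow_of_mem_span_pair_pow hx
  have had : a ∣ d * b ^ (n + 1) := ⟨x - y, by linear_combination -hxy⟩
  obtain ⟨e, rfl⟩ := (ha.dvd_or_dvd had).resolve_right fun h => hab (ha.dvd_of_dvd_pow h)
  have hx_eq : x = y + e * b * b ^ n :=
    mul_left_cancel₀ ha.ne_zero (by linear_combination hxy)
  rw [hx_eq]
  exact add_mem hy (Ideal.mul_mem_left _ _ (Ideal.pow_mem_pow (Ideal.subset_span (by simp)) n))

theorem mem_span_pair_pow_of_mul_mem (ha : Prime a) (hab : ¬ a ∣ b)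
    (hprime : (Ideal.span {a, b}).IsPrime) (hc : c ∉ Ideal.span {a, b})
    (hx : c * x ∈ Ideal.span {a, b} ^ n) : x ∈ Ideal.span {a, b} ^ n := by
  induction n using Nat.twoStepInduction generalizing x with
  | zero => simp
  | one =>
    rw [pow_one] at hx ⊢
    exact (hprime.mem_or_mem hx).resolve_left hc
  | more n _ ih =>
    set P := Ideal.span {a, b}
    have haP : a ∈ P := Ideal.subset_span (by simp)
    have hbP : b ∈ P := Ideal.subset_span (by simp)
    obtain ⟨y, -, e, rfl⟩ :=
      exists_eq_mul_add_mul_pow_of_mem_span_pair_pow (ih (Ideal.pow_le_pow_right (by lia) hx))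
    obtain ⟨z, -, d, hz⟩ := exists_eq_mul_add_mul_pow_of_mem_span_pair_pow hx
    -- Comparing the two expansions modulo `a`, the coefficient `e` lies in `P`.
    have ha_dvd : a ∣ (c * e - d * b) * b ^ (n + 1) := ⟨z - c * y, by linear_combination hz⟩
    have hce : c * e ∈ P := by
      obtain ⟨r, hr⟩ := (ha.dvd_or_dvd ha_dvd).resolve_right fun h => hab (ha.dvd_of_dvd_pow h)
      rw [sub_eq_iff_eq_add.1 hr]
      exact add_mem (P.mul_mem_right _ haP) (P.mul_mem_left _ hbP)
    have heb : e * b ^ (n + 1) ∈ P ^ (n + 2) := by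
      rw [pow_succ' P]
      exact Ideal.mul_mem_mul ((hprime.mem_or_mem hce).resolve_left hc) (Ideal.pow_mem_pow hbP _)
    have hacy : a * (c * y) ∈ P ^ (n + 2) := by
      have : a * (c * y) = c * (a * y + e * b ^ (n + 1)) - c * (e * b ^ (n + 1)) := by ring
      rw [this]
      exact sub_mem hx (Ideal.mul_mem_left _ _ heb)
    have hay : a * y ∈ P ^ (n + 2) := by
      rw [pow_succ' P]
      exact Ideal.mul_mem_mul haP (ih (mem_span_pair_pow_of_left_mul_mem ha hab hacy))
    exact add_mem hay heb

end SpanPair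

section ProdPow

variable {R ι : Type*} [CommSemiring R] [Fintype ι] {a : ι → R} {i j : ι}

theorem prod_pow_mem_pow {I : Ideal R} (hi : a i ∈ I) (k : ℕ) : (∏ l, a l) ^ k ∈ I ^ k :=
  Ideal.pow_mem_pow (Ideal.mem_of_dvd _ (Finset.dvd_prod_of_mem a (Finset.mem_univ i)) hi) k

theorem prod_pow_mem_span_pair_pow (hij : i ≠ j) (k : ℕ) :
    (∏ l, a l) ^ k ∈ Ideal.span {a i, a j} ^ (2 * k) := by
  classical
  have hdvd : a i * a j ∣ ∏ l, a l := by
    rw [← Finset.prod_pair hij]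
    exact Finset.prod_dvd_prod_of_subset _ _ _ (Finset.subset_univ _)
  have hmem : a i * a j ∈ Ideal.span {a i, a j} ^ 2 := by
    rw [pow_two]
    exact Ideal.mul_mem_mul (Ideal.subset_span (by simp)) (Ideal.subset_span (by simp))
  rw [pow_mul]
  exact Ideal.pow_mem_pow (Ideal.mem_of_dvd _ hdvd hmem) k

end ProdPow

section LinearForms

variable {σ K : Type*} [Field K] {S : Set (MvPolynomial σ K)} {f g : MvPolynomial σ K}

/-- Geometrically, `φ` is restriction to the linear subspace cut out by `S`, followed by pullback
along a linear projection onto that subspace. -/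
theorem exists_algHom_ker_eq_span (hS : ∀ f ∈ S, f.IsHomogeneous 1) :
    ∃ φ : MvPolynomial σ K →ₐ[K] MvPolynomial σ K, RingHom.ker φ = Ideal.span S ∧
      ∀ f, f.IsHomogeneous 1 → φ f - f ∈ Submodule.span K S := by
  obtain ⟨ρ, hρ⟩ := (Submodule.span K S).subtype.exists_leftInverse_of_injective
    (Submodule.ker_subtype _)
  let φ : MvPolynomial σ K →ₐ[K] MvPolynomial σ K := aeval fun i => X i - (ρ (X i)).1
  have hφ (f : MvPolynomial σ K) (hf : f.IsHomogeneous 1) : φ f = f - (ρ f).1 := by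
    rw [← mem_homogeneousSubmodule, homogeneousSubmodule_one_eq_span_X] at hf
    refine LinearMap.eqOn_span (f := φ.toLinearMap)
      (g := LinearMap.id - (Submodule.span K S).subtype ∘ₗ ρ) ?_ hf
    rintro _ ⟨i, rfl⟩
    simp [φ]
  have hspan : (Submodule.span K S : Set (MvPolynomial σ K)) ⊆ Ideal.span S :=
    Submodule.span_subset_span K _ S
  refine ⟨φ, le_antisymm (fun F hF => ?_) (Ideal.span_le.2 fun f hf => ?_), fun f hf => ?_⟩
  · have hmk : (Ideal.Quotient.mkₐ K (Ideal.span S)).comp φ = Ideal.Quotient.mkₐ K _ := by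
      ext i
      simpa [φ] using Ideal.Quotient.eq_zero_iff_mem.2 (hspan (ρ (X i)).2)
    have hF_mk := DFunLike.congr_fun hmk F
    rw [AlgHom.comp_apply, (RingHom.mem_ker).1 hF, map_zero] at hF_mk
    exact Ideal.Quotient.eq_zero_iff_mem.1 hF_mk.symm
  · have hρf := LinearMap.congr_fun hρ ⟨f, Submodule.subset_span hf⟩
    simp only [LinearMap.comp_apply, Submodule.subtype_apply, LinearMap.id_apply] at hρf
    rw [SetLike.mem_coe, RingHom.mem_ker, hφ f (hS f hf), hρf, sub_self]
  · rw [hφ f hf, sub_sub_cancel_left]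
    exact neg_mem (ρ f).2

theorem isPrime_span_of_isHomogeneous_one_s5 (hS : ∀ f ∈ S, f.IsHomogeneous 1) :
    (Ideal.span S).IsPrime := by
  obtain ⟨φ, hker, -⟩ := exists_algHom_ker_eq_span hS
  exact hker ▸ RingHom.ker_isPrime φ

theorem mem_ideal_span_iff_mem_submodule_span (hS : ∀ f ∈ S, f.IsHomogeneous 1)
    (hf : f.IsHomogeneous 1) : f ∈ Ideal.span S ↔ f ∈ Submodule.span K S := by
  refine ⟨fun hfS => ?_, fun hfS => Submodule.span_subset_span K _ S hfS⟩
  obtain ⟨φ, hker, hsub⟩ := exists_algHom_ker_eq_span hS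
  rw [← hker, RingHom.mem_ker] at hfS
  simpa [hfS] using hsub f hf

theorem prime_of_isHomogeneous_one_s5 (hf : f.IsHomogeneous 1) (hf0 : f ≠ 0) : Prime f :=
  (Ideal.span_singleton_prime hf0).1 (isPrime_span_of_isHomogeneous_one_s5 (by simpa using hf))

theorem dvd_iff_mem_span_singleton_of_isHomogeneous_one (hf : f.IsHomogeneous 1)
    (hg : g.IsHomogeneous 1) : f ∣ g ↔ g ∈ Submodule.span K {f} := by
  rw [← Ideal.mem_span_singleton,
    mem_ideal_span_iff_mem_submodule_span (by simpa using hf) hg]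

theorem totalDegree_algHom_apply_le {σ τ R : Type*} [CommSemiring R]
    (φ : MvPolynomial σ R →ₐ[R] MvPolynomial τ R) (hφ : ∀ i, (φ (X i)).IsHomogeneous 1)
    (F : MvPolynomial σ R) :
    (φ F).totalDegree ≤ F.totalDegree := by
  rw [aeval_unique φ]
  conv_lhs => rw [← sum_homogeneousComponent F, map_sum]
  refine totalDegree_finsetSum_le fun d hd => ?_
  have hd_homog := (homogeneousComponent_isHomogeneous d F).aeval (φ ∘ X) hφ
  exact hd_homog.totalDegree_le.trans (by rw [one_mul]; exact Finset.mem_range_succ_iff.1 hd)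

theorem mem_span_range_of_eval_eq_zero {ι : Type*} [Fintype σ] [Fintype ι]
    {v : ι → MvPolynomial σ K} (hv : LinearIndependent K v) (hvdeg : ∀ i, (v i).IsHomogeneous 1)
    (hcard : Fintype.card σ ≤ Fintype.card ι + 1) {p : σ → K} (hp : p ≠ 0)
    (hvp : ∀ i, eval p (v i) = 0) (hf : f.IsHomogeneous 1) (hfp : eval p f = 0) :
    f ∈ Submodule.span K (Set.range v) := by
  by_contra hfv
  set w : Option ι → MvPolynomial σ K := fun o => o.casesOn' f v
  have hw_deg : Submodule.span K (Set.range w) ≤ homogeneousSubmodule σ K 1 := by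
    rw [Submodule.span_le]
    rintro _ ⟨_ | i, rfl⟩
    exacts [hf, hvdeg i]
  have hw_eval : Submodule.span K (Set.range w) ≤ LinearMap.ker (aeval p).toLinearMap := by
    rw [Submodule.span_le]
    rintro _ ⟨_ | i, rfl⟩
    exacts [hfp, hvp i]
  have hw_span : Submodule.span K (Set.range w) = homogeneousSubmodule σ K 1 := by
    have : FiniteDimensional K (homogeneousSubmodule σ K 1) :=
      Module.Finite.iff_fg.2 (homogeneousSubmodule_fg _ _ 1)
    refine Submodule.eq_of_le_of_finrank_le hw_deg ?_
    rw [finrank_span_eq_card (hv.option hfv), Fintype.card_option,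
      homogeneousSubmodule_one_eq_span_X]
    exact (finrank_range_le_card _).trans hcard
  refine hp (funext fun i => ?_)
  simpa using hw_eval (hw_span.ge (isHomogeneous_X K i))

end LinearForms

section PointIdeal

variable {K : Type*} [Field K]

theorem mem_pointIdeal {p : Fin 3 → K} {f : MvPolynomial (Fin 3) K} (hf : f.IsHomogeneous 1)
    (hfp : eval p f = 0) : f ∈ pointIdeal p :=
  Ideal.subset_span ⟨hf, hfp⟩

theorem pointIdeal_eq_span_pair_of_linearIndependent {p : Fin 3 → K} (hp : p ≠ 0)
    {a b : MvPolynomial (Fin 3) K} (ha : a.IsHomogeneous 1) (hb : b.IsHomogeneous 1)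
    (hab : LinearIndependent K ![a, b]) (hap : eval p a = 0) (hbp : eval p b = 0) :
    pointIdeal p = Ideal.span {a, b} := by
  refine le_antisymm (Ideal.span_le.2 fun f ⟨hf, hfp⟩ => ?_) (Ideal.span_le.2 ?_)
  · have hmem := mem_span_range_of_eval_eq_zero hab (by simp [Fin.forall_fin_two, ha, hb])
      (by simp) hp (by simp [Fin.forall_fin_two, hap, hbp]) hf hfp
    rw [Matrix.range_cons_cons_empty] at hmem
    exact Submodule.span_subset_span K _ _ hmem
  · rintro _ (rfl | rfl)
    exacts [mem_pointIdeal ha hap, mem_pointIdeal hb hbp]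

end PointIdeal

theorem alpha_eq_of_mem_of_forall_le {σ K : Type*} [Field K]
    {J : Ideal (MvPolynomial σ K)} {f : MvPolynomial σ K} {d : ℕ} (hfJ : f ∈ J)
    (hf0 : f ≠ 0) (hfd : f.IsHomogeneous d)
    (hle : ∀ g ∈ J, g ≠ 0 → d ≤ g.totalDegree) : alpha J = d := by
  refine le_antisymm (Nat.sInf_le ⟨f, hfJ, hf0, hfd⟩) (le_csInf ⟨d, f, hfJ, hf0, hfd⟩ ?_)
  rintro e ⟨g, hgJ, hg0, hge⟩
  exact (hle g hgJ hg0).trans_eq (hge.totalDegree hg0)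

/-- A family of linear forms defining hyperplanes in general position, as far as pairwise
intersections are concerned: any three members are linearly independent. Quantifying over finsets
with at most three elements also covers families with fewer than three members. -/
structure IsStarArrangement {σ K ι : Type*} [Field K] (ℓ : ι → MvPolynomial σ K) : Prop where
  isHomogeneous : ∀ i, (ℓ i).IsHomogeneous 1
  linearIndependent : ∀ T : Finset ι, T.card ≤ 3 → LinearIndependent K fun i : T => ℓ i

namespace IsStarArrangement

variable {σ K ι : Type*} [Field K] {ℓ : ι → MvPolynomial σ K} {F G : MvPolynomial σ K}
  {i j l : ι} {m : ℕ}

theorem prime (hℓ : IsStarArrangement ℓ) (i : ι) : Prime (ℓ i) :=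
  prime_of_isHomogeneous_one_s5 (hℓ.isHomogeneous i)
    ((hℓ.linearIndependent {i} (by simp)).ne_zero ⟨i, by simp⟩)

theorem notMem_submodule_span_pair (hℓ : IsStarArrangement ℓ) (hli : l ≠ i) (hlj : l ≠ j) :
    ℓ l ∉ Submodule.span K {ℓ i, ℓ j} := by
  classical
  have hind : LinearIndepOn K ℓ ({l, i, j} : Finset ι) :=
    hℓ.linearIndependent _ Finset.card_le_three
  rw [Finset.coe_insert, linearIndepOn_insert (by simp [hli, hlj])] at hind
  simpa [Set.image_pair] using hind.2

theorem isHomogeneous_of_mem_pair (hℓ : IsStarArrangement ℓ) (i j : ι) :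
    ∀ f ∈ ({ℓ i, ℓ j} : Set (MvPolynomial σ K)), f.IsHomogeneous 1 := by
  rintro _ (rfl | rfl)
  exacts [hℓ.isHomogeneous i, hℓ.isHomogeneous j]

theorem isPrime_span_pair (hℓ : IsStarArrangement ℓ) (i j : ι) :
    (Ideal.span {ℓ i, ℓ j}).IsPrime :=
  isPrime_span_of_isHomogeneous_one_s5 (hℓ.isHomogeneous_of_mem_pair i j)

theorem notMem_ideal_span_pair (hℓ : IsStarArrangement ℓ) (hli : l ≠ i) (hlj : l ≠ j) :
    ℓ l ∉ Ideal.span {ℓ i, ℓ j} := by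
  rw [mem_ideal_span_iff_mem_submodule_span (hℓ.isHomogeneous_of_mem_pair i j)
    (hℓ.isHomogeneous l)]
  exact hℓ.notMem_submodule_span_pair hli hlj

theorem not_dvd (hℓ : IsStarArrangement ℓ) (hij : i ≠ j) : ¬ ℓ i ∣ ℓ j := by
  rw [← Ideal.mem_span_singleton, ← Set.pair_eq_singleton]
  exact hℓ.notMem_ideal_span_pair hij.symm hij.symm

theorem linearIndependent_pair (hℓ : IsStarArrangement ℓ) (hij : i ≠ j) :
    LinearIndependent K ![ℓ i, ℓ j] :=
  (LinearIndependent.pair_iff' (hℓ.prime i).ne_zero).2 fun c hc =>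
    hℓ.not_dvd hij ⟨C c, by rw [← hc, smul_eq_C_mul, mul_comm]⟩

theorem exists_hyperplane_restriction (hℓ : IsStarArrangement ℓ) (i : ι) :
    ∃ φ : MvPolynomial σ K →ₐ[K] MvPolynomial σ K, (∀ f, φ f = 0 ↔ ℓ i ∣ f) ∧
      (∀ f, f.IsHomogeneous 1 → (φ f).IsHomogeneous 1) ∧
      ∀ j l, l ≠ i → j ≠ l → ¬ φ (ℓ j) ∣ φ (ℓ l) := by
  have hi : ∀ f ∈ ({ℓ i} : Set (MvPolynomial σ K)), f.IsHomogeneous 1 := by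
    simpa using hℓ.isHomogeneous i
  obtain ⟨φ, hker, hsub⟩ := exists_algHom_ker_eq_span hi
  have hφ_zero (f : MvPolynomial σ K) : φ f = 0 ↔ ℓ i ∣ f := by
    rw [← Ideal.mem_span_singleton, ← hker, RingHom.mem_ker]
  have hφ_homog (f : MvPolynomial σ K) (hf : f.IsHomogeneous 1) : (φ f).IsHomogeneous 1 := by
    have hspan : Submodule.span K {ℓ i} ≤ homogeneousSubmodule σ K 1 := Submodule.span_le.2 hi
    simpa using (hspan (hsub f hf)).add hf
  refine ⟨φ, hφ_zero, hφ_homog, fun j l hli hjl hdvd => ?_⟩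
  rw [dvd_iff_mem_span_singleton_of_isHomogeneous_one (hφ_homog _ (hℓ.isHomogeneous j))
    (hφ_homog _ (hℓ.isHomogeneous l)), Submodule.mem_span_singleton] at hdvd
  obtain ⟨c, hc⟩ := hdvd
  obtain ⟨r, hr⟩ := (hφ_zero (ℓ l - c • ℓ j)).1 (by rw [map_sub, map_smul, hc, sub_self])
  refine hℓ.notMem_ideal_span_pair hli hjl.symm (Ideal.mem_span_pair.2 ⟨r, C c, ?_⟩)
  rw [← smul_eq_C_mul]
  linear_combination -hr

section Fintype

variable [Fintype ι]

theorem prod_dvd (hℓ : IsStarArrangement ℓ) (h : ∀ i, ℓ i ∣ F) : ∏ i, ℓ i ∣ F :=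
  Finset.prod_dvd_of_isRelPrime
    (fun i _ _ _ hij => (hℓ.prime i).irreducible.isRelPrime_iff_not_dvd.2 (hℓ.not_dvd hij))
    fun i _ => h i

theorem isHomogeneous_prod (hℓ : IsStarArrangement ℓ) :
    (∏ i, ℓ i).IsHomogeneous (Fintype.card ι) := by
  simpa using IsHomogeneous.prod Finset.univ ℓ (fun _ => 1) fun i _ => hℓ.isHomogeneous i

theorem prod_ne_zero (hℓ : IsStarArrangement ℓ) : ∏ i, ℓ i ≠ 0 :=
  Finset.prod_ne_zero_iff.2 fun i _ => (hℓ.prime i).ne_zero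

/-- Restricted to the hyperplane `ℓ i = 0`, the polynomial `F` is divisible by `ℓ j ^ m` for every
`j ≠ i`, which its degree does not allow unless the restriction vanishes. -/
theorem dvd_of_mem_span_pair_pow (hℓ : IsStarArrangement ℓ)
    (hF : ∀ j, j ≠ i → F ∈ Ideal.span {ℓ i, ℓ j} ^ m)
    (hdeg : F.totalDegree < (Fintype.card ι - 1) * m) : ℓ i ∣ F := by
  classical
  obtain ⟨φ, hφ_zero, hφ_homog, hφ_dvd⟩ := hℓ.exists_hyperplane_restriction i
  have hφ_prime (j : ι) (hj : j ≠ i) : Prime (φ (ℓ j)) :=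
    prime_of_isHomogeneous_one_s5 (hφ_homog _ (hℓ.isHomogeneous j))
      (mt (hφ_zero _).1 (hℓ.not_dvd hj.symm))
  have hpow_dvd (j : ι) (hj : j ≠ i) : φ (ℓ j) ^ m ∣ φ F := by
    have hmem := Ideal.mem_map_of_mem φ (hF j hj)
    rwa [Ideal.map_pow, Ideal.map_span, Set.image_pair, (hφ_zero _).2 dvd_rfl,
      Ideal.span_insert_zero, Ideal.span_singleton_pow, Ideal.mem_span_singleton] at hmem
  have hprod_dvd : ∏ j ∈ Finset.univ.erase i, φ (ℓ j) ^ m ∣ φ F := by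
    refine Finset.prod_dvd_of_isRelPrime (fun j hj l hl hjl => IsRelPrime.pow ?_)
      fun j hj => hpow_dvd j (Finset.ne_of_mem_erase hj)
    exact (hφ_prime j (Finset.ne_of_mem_erase hj)).irreducible.isRelPrime_iff_not_dvd.2
      (hφ_dvd j l (Finset.ne_of_mem_erase hl) hjl)
  have hprod_homog :
      (∏ j ∈ Finset.univ.erase i, φ (ℓ j) ^ m).IsHomogeneous ((Fintype.card ι - 1) * m) := by
    simpa using IsHomogeneous.prod (Finset.univ.erase i) _ (fun _ => 1 * m)
      fun j _ => (hφ_homog _ (hℓ.isHomogeneous j)).pow m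
  rw [← hφ_zero]
  by_contra hφF
  have hdeg_le := totalDegree_le_of_dvd_of_isDomain hprod_dvd hφF
  rw [hprod_homog.totalDegree (ne_zero_of_dvd_ne_zero hφF hprod_dvd)] at hdeg_le
  have hφ_deg := totalDegree_algHom_apply_le φ (fun e => hφ_homog _ (isHomogeneous_X K e)) F
  lia

theorem mem_span_pair_pow_of_prod_mul_mem (hℓ : IsStarArrangement ℓ) (hij : i ≠ j)
    (hG : (∏ l, ℓ l) * G ∈ Ideal.span {ℓ i, ℓ j} ^ (m + 2)) :
    G ∈ Ideal.span {ℓ i, ℓ j} ^ m := by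
  classical
  have hprod : ∏ l, ℓ l = ℓ i * (ℓ j * ∏ l ∈ (Finset.univ.erase i).erase j, ℓ l) := by
    rw [Finset.mul_prod_erase _ _ (by simp [hij.symm]), Finset.mul_prod_erase _ _ (by simp)]
  have hrest : ∏ l ∈ (Finset.univ.erase i).erase j, ℓ l ∉ Ideal.span {ℓ i, ℓ j} := by
    rw [(hℓ.isPrime_span_pair i j).prod_mem_iff]
    rintro ⟨l, hl, hmem⟩
    simp only [Finset.mem_erase, Finset.mem_univ, and_true] at hl
    exact hℓ.notMem_ideal_span_pair hl.2 hl.1 hmem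
  rw [hprod, mul_assoc, mul_assoc] at hG
  have hG' := mem_span_pair_pow_of_left_mul_mem (hℓ.prime i) (hℓ.not_dvd hij) hG
  rw [Set.pair_comm] at hG'
  have hG'' := mem_span_pair_pow_of_left_mul_mem (hℓ.prime j) (hℓ.not_dvd hij.symm) hG'
  rw [Set.pair_comm] at hG''
  exact mem_span_pair_pow_of_mul_mem (hℓ.prime i) (hℓ.not_dvd hij) (hℓ.isPrime_span_pair i j)
    hrest hG''

theorem card_mul_le_totalDegree [Nontrivial ι] (hℓ : IsStarArrangement ℓ) {k : ℕ} (hF0 : F ≠ 0)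
    (hF : ∀ i j, i ≠ j → F ∈ Ideal.span {ℓ i, ℓ j} ^ (2 * k)) :
    Fintype.card ι * k ≤ F.totalDegree := by
  induction k generalizing F with
  | zero => simp
  | succ k ih =>
    by_contra! hlt
    have hcard : Fintype.card ι * (k + 1) ≤ (Fintype.card ι - 1) * (2 * (k + 1)) := by
      rw [← mul_assoc]
      have := Fintype.one_lt_card (α := ι)
      exact Nat.mul_le_mul_right _ (by lia)
    obtain ⟨G, rfl⟩ : ∏ i, ℓ i ∣ F := hℓ.prod_dvd fun i =>
      hℓ.dvd_of_mem_span_pair_pow (fun j hj => hF i j hj.symm) (hlt.trans_le hcard)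
    have hG := ih (right_ne_zero_of_mul hF0) fun i j hij =>
      hℓ.mem_span_pair_pow_of_prod_mul_mem hij (hF i j hij)
    rw [totalDegree_mul_of_isDomain hℓ.prod_ne_zero (right_ne_zero_of_mul hF0),
      hℓ.isHomogeneous_prod.totalDegree hℓ.prod_ne_zero] at hlt
    lia

end Fintype

theorem pointIdeal_eq_span_pair {ℓ : ι → MvPolynomial (Fin 3) K} (hℓ : IsStarArrangement ℓ)
    (hij : i ≠ j) {p : Fin 3 → K} (hp : p ≠ 0) (hpL : eval p (ℓ i) = 0 ∧ eval p (ℓ j) = 0) :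
    pointIdeal p = Ideal.span {ℓ i, ℓ j} :=
  pointIdeal_eq_span_pair_of_linearIndependent hp (hℓ.isHomogeneous i) (hℓ.isHomogeneous j)
    (hℓ.linearIndependent_pair hij) hpL.1 hpL.2

theorem alpha_eq {s : ℕ} (hs : 2 ≤ s) {ℓ : Fin s → MvPolynomial σ K}
    (hℓ : IsStarArrangement ℓ) {Q : Fin s → Ideal (MvPolynomial σ K)} (hQ : ∀ i, ℓ i ∈ Q i)
    (k : ℕ) :
    alpha ((⨅ i, Q i ^ k) ⊓ ⨅ (i) (j) (_ : i < j), Ideal.span {ℓ i, ℓ j} ^ (2 * k)) = s * k := by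
  have : Nontrivial (Fin s) := Fin.nontrivial_iff_two_le.2 hs
  refine alpha_eq_of_mem_of_forall_le (f := (∏ i, ℓ i) ^ k) ?_ (pow_ne_zero k hℓ.prod_ne_zero)
    (by simpa using hℓ.isHomogeneous_prod.pow k) fun g hg hg0 => ?_
  · simp only [Submodule.mem_inf, Submodule.mem_iInf]
    exact ⟨fun i => prod_pow_mem_pow (hQ i) k, fun i j hij => prod_pow_mem_span_pair_pow hij.ne k⟩
  · simp only [Submodule.mem_inf, Submodule.mem_iInf] at hg
    rw [← Fintype.card_fin s]
    refine hℓ.card_mul_le_totalDegree hg0 fun i j hij => ?_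
    rcases hij.lt_or_gt with hlt | hgt
    · exact hg.2 i j hlt
    · rw [Set.pair_comm]
      exact hg.2 j i hgt

end IsStarArrangement

theorem waldschmidt_fat_quasi_star_general {σ K : Type*} [Field K] {s : ℕ} (hs : 2 ≤ s)
    {ℓ : Fin s → MvPolynomial σ K} (hℓ : IsStarArrangement ℓ)
    {Q : Fin s → Ideal (MvPolynomial σ K)} (hQ : ∀ i, ℓ i ∈ Q i) :
    (∀ k : ℕ, alpha ((⨅ i, Q i ^ k) ⊓
      ⨅ (i) (j) (_ : i < j), Ideal.span {ℓ i, ℓ j} ^ (2 * k)) = s * k) ∧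
    ⨅ k : ℕ+, (alpha ((⨅ i, Q i ^ (k : ℕ)) ⊓
      ⨅ (i) (j) (_ : i < j), Ideal.span {ℓ i, ℓ j} ^ (2 * (k : ℕ))) : ℝ) / (k : ℕ) = s := by
  refine ⟨hℓ.alpha_eq hs hQ, ?_⟩
  have hratio (k : ℕ+) : ((s * k : ℕ) : ℝ) / (k : ℕ) = s := by
    rw [Nat.cast_mul, mul_div_cancel_right₀ _ (Nat.cast_ne_zero.2 k.ne_zero)]
  simp only [hℓ.alpha_eq hs hQ, hratio, ciInf_const]

/-- Let `s ≥ 3` and let `L_1, …, L_s` be lines of `ℙ²` in general position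
(defining linear forms `ℓ i`, any three of them linearly independent, hence pairwise
distinct and no three concurrent), and let `p i j` (for `i < j`) represent the star
configuration point `L_i ∩ L_j`.  For each `i` let `q i` be a point of `L_i` distinct from
all the points `p j l`, with `q 1, …, q s` pairwise distinct and not all collinear.  Let
`W_2` be the fat quasi-star configuration with
`I(W_2) = ⋂_i I(q_i) ∩ ⋂_{i<j} I(p_{ij})²`, with `k`-th symbolic power
`⋂_i I(q_i)^k ∩ ⋂_{i<j} I(p_{ij})^{2k}`.  Then `α(I(W_2)^{(k)}) = s·k` for every `k ≥ 1`;
in particular the Waldschmidt constant of `I(W_2)` equals `s`. -/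
theorem waldschmidt_fat_quasi_star
    {kk : Type*} [Field kk] [IsAlgClosed kk]
    (s : ℕ) (hs : 3 ≤ s)
    (ℓ : Fin s → MvPolynomial (Fin 3) kk)
    (hdeg : ∀ i, (ℓ i).IsHomogeneous 1)
    (hgen : ∀ T : Finset (Fin s), T.card ≤ 3 →
      LinearIndependent kk (fun i : T => ℓ (i : Fin s)))
    (p : Fin s → Fin s → (Fin 3 → kk))
    (hp0 : ∀ i j, i < j → p i j ≠ 0)
    (hpL : ∀ i j, i < j →
      MvPolynomial.eval (p i j) (ℓ i) = 0 ∧ MvPolynomial.eval (p i j) (ℓ j) = 0)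
    (q : Fin s → (Fin 3 → kk))
    (hq0 : ∀ i, q i ≠ 0)
    (hqL : ∀ i, MvPolynomial.eval (q i) (ℓ i) = 0)
    (hqp : ∀ i j l, j < l → ¬ projEq (q i) (p j l))
    (hqdist : ∀ i i', i ≠ i' → ¬ projEq (q i) (q i'))
    (hqncol : ¬ ∃ g : MvPolynomial (Fin 3) kk, g ≠ 0 ∧ g.IsHomogeneous 1 ∧
      ∀ i, MvPolynomial.eval (q i) g = 0) :
    (∀ k : ℕ, 1 ≤ k →
      alpha ((⨅ i : Fin s, pointIdeal (q i) ^ k) ⊓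
        ⨅ (i : Fin s) (j : Fin s) (_ : i < j), pointIdeal (p i j) ^ (2 * k)) = s * k) ∧
    ⨅ k : ℕ+, (alpha ((⨅ i : Fin s, pointIdeal (q i) ^ (k : ℕ)) ⊓
        ⨅ (i : Fin s) (j : Fin s) (_ : i < j),
          pointIdeal (p i j) ^ (2 * (k : ℕ))) : ℝ) / ((k : ℕ) : ℝ) = (s : ℝ) := by
  have hℓ : IsStarArrangement ℓ := ⟨hdeg, hgen⟩
  have hP (i j : Fin s) (hij : i < j) : pointIdeal (p i j) = Ideal.span {ℓ i, ℓ j} :=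
    hℓ.pointIdeal_eq_span_pair hij.ne (hp0 i j hij) (hpL i j hij)
  have ⟨halpha, hinf⟩ := waldschmidt_fat_quasi_star_general (by lia) hℓ
    fun i => mem_pointIdeal (hdeg i) (hqL i)
  simpa +contextual only [hP] using ⟨fun k (_ : 1 ≤ k) => halpha k, hinf⟩
end
end
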